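/- arXiv:2510.10901 — 3 statements merged into one kernel-verified Lean document; each statement's English description precedes it below -/
import Mathlib

section
/- Let S be a finite set of positive integers. For every positive integer n, α_S(n) + ∑_{(a,b) ∈ supp(α_S) × supp(α_S), gcd(a,b) = n} α_S(a) α_S(b) = 0. (This identity is equivalent to the statement that the key element k_S = (O(2)) + ∑_n α_S(n)(D_n) squares to the identity (O(2)) in the Burnside ring A(O(2)).) -/
/-- The key coefficient function `α_S : ℕ → ℤ` (supported on positive integers),
packaged as a finitely supported function:
`α_S(n) = ∑_{I ⊆ S, I ≠ ∅} (−1)^{|I|} 2^{|I|−1} [n = gcd(I)]`. -/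
noncomputable def alphaF (S : Finset ℕ) : ℕ →₀ ℤ :=
  ∑ I ∈ S.powerset.filter (· ≠ ∅),
    Finsupp.single (I.gcd id) ((-1 : ℤ) ^ I.card * 2 ^ (I.card - 1))

/-!
In the Burnside ring `(D_a) (D_b) = 2 (D_{gcd(a,b)})`, so the elements `e_s = (D_s) / 2` behave as
idempotents, with `e_a e_b = e_{gcd(a,b)}`. For commuting idempotents in any ring, each `1 - 2 e_s`
is an involution, and `∏ (1 - 2 e_s) = 1 + 2 κ` where `κ` has the coefficients `α_S`. Adjoining an
idempotent `a` replaces `-κ` by its symmetric difference `a + (-κ) - 2 a (-κ)` with `a`, which is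
again idempotent. Hence `κ + κ ^ 2 = 0` without any division by `2`, and comparing coefficients in
the monoid algebra of `(ℕ, gcd)` gives the identity.
-/

section KeySum

variable {ι R : Type*} [CommRing R]

/-- The element `κ` with `∏ i ∈ s, (1 - 2 * e i) = 1 + 2 * κ` obtained by expanding the product and
halving the coefficients formally, so that `2` need not be invertible or regular in `R`. -/
def keySum (s : Finset ι) (e : ι → R) : R :=
  ∑ I ∈ s.powerset with I.Nonempty, ((-1 : ℤ) ^ I.card * 2 ^ (I.card - 1)) • ∏ i ∈ I, e i

@[simp]
theorem keySum_empty (e : ι → R) : keySum ∅ e = 0 := by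
  simp [keySum, Finset.sum_filter]

theorem prod_one_sub_two_mul_eq_sum_powerset (s : Finset ι) (e : ι → R) :
    ∏ i ∈ s, (1 - 2 * e i) = ∑ I ∈ s.powerset, (-2) ^ I.card * ∏ i ∈ I, e i := by
  classical
  simp_rw [sub_eq_add_neg, ← neg_mul, Finset.prod_one_add, Finset.prod_mul_distrib,
    Finset.prod_const]

theorem keySum_insert [DecidableEq ι] {a : ι} {s : Finset ι} (ha : a ∉ s) (e : ι → R) :
    keySum (insert a s) e = keySum s e - e a * ∏ i ∈ s, (1 - 2 * e i) := by
  have insert_term : ∀ I ∈ s.powerset,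
      ((-1 : ℤ) ^ (insert a I).card * 2 ^ ((insert a I).card - 1)) • ∏ i ∈ insert a I, e i
        = -(e a * ((-2) ^ I.card * ∏ i ∈ I, e i)) := by
    intro I hI
    have haI : a ∉ I := fun h => ha (Finset.mem_powerset.1 hI h)
    rw [Finset.card_insert_of_notMem haI, Finset.prod_insert haI, Nat.add_sub_cancel,
      zsmul_eq_mul, neg_pow (2 : R)]
    push_cast
    ring
  simp only [keySum, Finset.sum_filter]
  rw [Finset.sum_powerset_insert ha, prod_one_sub_two_mul_eq_sum_powerset, Finset.mul_sum,
    sub_eq_add_neg, ← Finset.sum_neg_distrib, ← Finset.sum_congr rfl insert_term]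
  simp only [Finset.insert_nonempty, if_true]

theorem prod_one_sub_two_mul (s : Finset ι) (e : ι → R) :
    ∏ i ∈ s, (1 - 2 * e i) = 1 + 2 * keySum s e := by
  classical
  induction s using Finset.induction_on with
  | empty => simp
  | insert a s ha ih =>
    rw [Finset.prod_insert ha, keySum_insert ha]
    linear_combination ih

theorem isIdempotentElem_neg_keySum {s : Finset ι} {e : ι → R}
    (he : ∀ i ∈ s, IsIdempotentElem (e i)) : IsIdempotentElem (-keySum s e) := by
  classical
  induction s using Finset.induction_on with
  | empty => simp [IsIdempotentElem.zero]
  | insert a s ha ih =>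
    have hκ : -keySum s e * -keySum s e = -keySum s e :=
      ih fun i hi => he i (Finset.mem_insert_of_mem hi)
    have hea : e a * e a = e a := he a (Finset.mem_insert_self a s)
    rw [keySum_insert ha, prod_one_sub_two_mul, IsIdempotentElem]
    linear_combination hκ + (1 + 2 * keySum s e) ^ 2 * hea

end KeySum

section KeyCoeff

variable {ι M : Type*} [CommMonoid M]

/-- The analogue of the key coefficient function for a family `f` in a commutative monoid, with
`∏ i ∈ I, f i` in place of `gcd(I)`. -/
noncomputable def keyCoeff (s : Finset ι) (f : ι → M) : M →₀ ℤ :=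
  ∑ I ∈ s.powerset with I.Nonempty,
    Finsupp.single (∏ i ∈ I, f i) ((-1 : ℤ) ^ I.card * 2 ^ (I.card - 1))

theorem coeff_keySum_of (s : Finset ι) (f : ι → M) :
    (keySum s fun i => MonoidAlgebra.of ℤ M (f i)).coeff = keyCoeff s f := by
  simp_rw [keySum, keyCoeff, ← map_prod, MonoidAlgebra.coeff_sum, MonoidAlgebra.coeff_smul,
    MonoidAlgebra.of_apply, MonoidAlgebra.coeff_single, Finsupp.smul_single, smul_eq_mul, mul_one]

theorem key_squares_to_identity_general [DecidableEq M] {s : Finset ι} {f : ι → M}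
    (hf : ∀ i ∈ s, IsIdempotentElem (f i)) (m : M) :
    keyCoeff s f m
      + ∑ ab ∈ ((keyCoeff s f).support ×ˢ (keyCoeff s f).support).filter
          (fun ab => ab.1 * ab.2 = m),
          keyCoeff s f ab.1 * keyCoeff s f ab.2 = 0 := by
  let κ : MonoidAlgebra ℤ M := keySum s fun i => MonoidAlgebra.of ℤ M (f i)
  have hκ : -κ * -κ = -κ :=
    isIdempotentElem_neg_keySum fun i hi => (hf i hi).map (MonoidAlgebra.of ℤ M)
  have hκ_add : κ + κ * κ = 0 := by linear_combination hκ
  have hm : κ.coeff m + (κ * κ).coeff m = 0 := by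
    rw [← Finsupp.add_apply, ← MonoidAlgebra.coeff_add, hκ_add, MonoidAlgebra.coeff_zero,
      Finsupp.zero_apply]
  rw [MonoidAlgebra.coeff_mul, coeff_keySum_of] at hm
  rw [Finset.sum_filter, Finset.sum_product]
  exact hm

end KeyCoeff

/-- The natural numbers as a commutative monoid under `gcd`, whose unit is `0`; a type synonym,
because `ℕ` already carries its usual multiplication. -/
def GcdNat : Type := ℕ

namespace GcdNat

/-- The identity map from `ℕ` to its type synonym `GcdNat`. -/
def ofNat (n : ℕ) : GcdNat := n

instance : DecidableEq GcdNat := inferInstanceAs (DecidableEq ℕ)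

instance : CommMonoid GcdNat where
  mul := Nat.gcd
  one := ofNat 0
  mul_assoc := Nat.gcd_assoc
  one_mul := Nat.gcd_zero_left
  mul_one := Nat.gcd_zero_right
  mul_comm := Nat.gcd_comm

theorem isIdempotentElem (a : GcdNat) : IsIdempotentElem a :=
  Nat.gcd_self a

theorem prod_ofNat (I : Finset ℕ) : ∏ s ∈ I, ofNat s = ofNat (I.gcd id) := by
  induction I using Finset.induction_on with
  | empty => rfl
  | insert a I ha ih =>
    rw [Finset.prod_insert ha, ih, Finset.gcd_insert]
    rfl

theorem keyCoeff_ofNat (S : Finset ℕ) : keyCoeff S ofNat = alphaF S := by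
  simp only [keyCoeff, prod_ofNat, Finset.nonempty_iff_ne_empty]
  rfl

end GcdNat

/-- `α_S(n) + ∑_{(a,b) ∈ supp(α_S) × supp(α_S), gcd(a,b) = n} α_S(a) α_S(b) = 0`;
equivalently, the key element `k_S` squares to the identity `(O(2))` in `A(O(2))`. -/
theorem key_squares_to_identity (S : Finset ℕ) (hS : ∀ s ∈ S, 0 < s)
    (n : ℕ) (hn : 0 < n) :
    alphaF S n
      + ∑ ab ∈ ((alphaF S).support ×ˢ (alphaF S).support).filter
          (fun ab => Nat.gcd ab.1 ab.2 = n),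
          alphaF S ab.1 * alphaF S ab.2 = 0 := by
  rw [← GcdNat.keyCoeff_ofNat]
  exact key_squares_to_identity_general (fun s _ => (GcdNat.ofNat s).isIdempotentElem) n
end

section
/- (Key Ambiguity on W_L) Let S be a finite set of positive integers, L a positive integer, and q a prime with q > L. Let S' = {q·s : s ∈ S}. Then for every finitely supported p : ℕ+ → ℤ with supp(p) ⊆ {1, …, L}, one has T_{S'} p = T_S p; that is, the key elements k_S and k_{S'} induce identical linear transformations on the submodule W_L = ℤ[{(D_1), …, (D_L)}]. -/
/-- The key operator `T_S` on finitely supported `p : ℕ →₀ ℤ`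
(`p` represents the dihedral plaintext `∑_i p(i)(D_i)`):
`(T_S p)(j) = p(j) + 2 ∑_{i ∈ supp p} ∑_{n ∈ supp α_S} p(i) α_S(n) [gcd(i,n) = j]`. -/
noncomputable def keyOp (S : Finset ℕ) (p : ℕ →₀ ℤ) : ℕ →₀ ℤ :=
  p + 2 • ∑ i ∈ p.support, ∑ n ∈ (alphaF S).support,
    Finsupp.single (Nat.gcd i n) (p i * alphaF S n)

/-!
Scaling `S` by `q ≠ 0` pushes `α_S` forward along `n ↦ q * n`, and `T_S p` depends on `α_S` only
through its pushforwards along the maps `n ↦ gcd(i, n)` for `i ∈ supp p`. When `i` is coprime to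
`q`, the map `gcd(i, ·)` does not see the factor `q`.
-/

theorem alphaF_image_mul_left (S : Finset ℕ) {q : ℕ} (hq : q ≠ 0) :
    alphaF (S.image (q * ·)) = (alphaF S).mapDomain (q * ·) := by
  have hinj : Function.Injective (q * ·) := mul_right_injective₀ hq
  have hgcd (I : Finset ℕ) : (I.image (q * ·)).gcd id = q * I.gcd id := by
    simpa only [Finset.gcd_image, Function.id_comp, id_eq, normalize_eq] using
      Finset.gcd_mul_left (s := I) (f := id) (a := q)
  have hsubsets : (S.image (q * ·)).powerset.filter (· ≠ ∅) =
      (S.powerset.filter (· ≠ ∅)).image (Finset.image (q * ·)) := by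
    simp only [Finset.powerset_image, Finset.filter_image, ne_eq, Finset.image_eq_empty]
  rw [alphaF, hsubsets, Finset.sum_image (Finset.image_injective hinj).injOn]
  simp only [alphaF, hgcd, Finset.card_image_of_injective _ hinj, Finsupp.mapDomain_finsetSum,
    Finsupp.mapDomain_single]

theorem mapDomain_gcd_mapDomain_mul_left {M : Type*} [AddCommMonoid M] {i q : ℕ}
    (h : i.Coprime q) (f : ℕ →₀ M) :
    (f.mapDomain (q * ·)).mapDomain i.gcd = f.mapDomain i.gcd := by
  have hcomp : i.gcd ∘ (q * ·) = i.gcd :=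
    funext fun n ↦ h.symm.gcd_mul_left_cancel_right n
  rw [← Finsupp.mapDomain_comp, hcomp]

theorem keyOp_eq_add_sum_mapDomain_gcd (S : Finset ℕ) (p : ℕ →₀ ℤ) :
    keyOp S p = p + 2 • p.sum fun i a ↦ a • (alphaF S).mapDomain i.gcd := by
  simp only [keyOp, Finsupp.sum, Finsupp.mapDomain, Finset.smul_sum, Finsupp.smul_single,
    smul_eq_mul]

theorem key_ambiguity_general (S : Finset ℕ) {q : ℕ} (hq : q ≠ 0) (p : ℕ →₀ ℤ)
    (hp : ∀ i ∈ p.support, i.Coprime q) :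
    keyOp (S.image (q * ·)) p = keyOp S p := by
  simp only [keyOp_eq_add_sum_mapDomain_gcd, alphaF_image_mul_left S hq]
  congr 2
  exact Finsupp.sum_congr fun i hi ↦ by rw [mapDomain_gcd_mapDomain_mul_left (hp i hi)]

/-- (Key Ambiguity on `W_L`) If `q` is a prime with `q > L` and
`S' = {q·s : s ∈ S}`, then `T_{S'}` and `T_S` agree on every plaintext
supported in `{1, …, L}`: the keys `k_S` and `k_{S'}` induce identical linear
transformations on `W_L = ℤ[{(D_1), …, (D_L)}]`. -/
theorem key_ambiguity (S : Finset ℕ) (hS : ∀ s ∈ S, 0 < s)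
    (L : ℕ) (hL : 0 < L) (q : ℕ) (hq : q.Prime) (hqL : L < q)
    (p : ℕ →₀ ℤ) (hp : p.support ⊆ Finset.Icc 1 L) :
    keyOp (S.image (fun s => q * s)) p = keyOp S p :=
  key_ambiguity_general S hq.ne_zero p fun _ hi ↦
    have ⟨hi1, hiL⟩ := Finset.mem_Icc.mp (hp hi)
    (Nat.coprime_of_lt_prime (Nat.ne_zero_of_lt hi1) (hiL.trans_lt hqL) hq).symm
end

section
/- (One-query distinguisher) Let S₀ and S₁ be finite sets of positive integers with S₀ ≠ S₁, and let x* be the largest element of the symmetric difference S₀ △ S₁. Then (T_{S₀} δ_{x*})(x*) ≠ (T_{S₁} δ_{x*})(x*); that is, the single chosen-plaintext query (D_{x*}) distinguishes the keys k_{S₀} and k_{S₁} with certainty by reading the coefficient of (D_{x*}) in the ciphertext. -/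
open Finset

theorem neg_one_pow_ne_neg_one_pow_iff {R : Type*} [Monoid R] [HasDistribNeg R]
    (h : (-1 : R) ≠ 1) (m n : ℕ) : (-1 : R) ^ m ≠ (-1) ^ n ↔ Odd (m + n) := by
  rcases m.even_or_odd with hm | hm <;> rcases n.even_or_odd with hn | hn
  · simp [hm.neg_one_pow, hn.neg_one_pow, hm.add hn]
  · simp [hm.neg_one_pow, hn.neg_one_pow, hm.add_odd hn, h.symm]
  · simp [hm.neg_one_pow, hn.neg_one_pow, hm.add_even hn, h]
  · simp [hm.neg_one_pow, hn.neg_one_pow, hm.add_odd hn]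

theorem odd_card_symmDiff_iff {α : Type*} [DecidableEq α] (S T : Finset α) :
    Odd #(symmDiff S T) ↔ Odd (#S + #T) := by
  have card_symmDiff : #(symmDiff S T) = #(S \ T) + #(T \ S) :=
    card_union_of_disjoint disjoint_sdiff_sdiff
  have card_add_card : #S + #T = #(symmDiff S T) + 2 * #(S ∩ T) := by
    rw [card_symmDiff, ← card_sdiff_add_card_inter S T, ← card_sdiff_add_card_inter T S,
      inter_comm T S]
    ring
  simp [card_add_card, Nat.odd_add]

theorem one_add_two_mul_sum_nonempty_powerset {α R : Type*} [DecidableEq α] [CommRing R]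
    (S : Finset α) :
    1 + 2 * ∑ I ∈ S.powerset with I ≠ ∅, (-1 : R) ^ #I * 2 ^ (#I - 1) = (-1) ^ #S := by
  have two_mul_term : ∀ I ∈ S.powerset.erase ∅,
      2 * ((-1 : R) ^ #I * 2 ^ (#I - 1)) = (-2) ^ #I := by
    intro I hI
    have hne : I.Nonempty := nonempty_iff_ne_empty.mpr (ne_of_mem_erase hI)
    rw [mul_left_comm, mul_pow_sub_one (card_ne_zero.mpr hne), ← mul_pow, neg_one_mul]
  calc 1 + 2 * ∑ I ∈ S.powerset with I ≠ ∅, (-1 : R) ^ #I * 2 ^ (#I - 1)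
    _ = 1 + ∑ I ∈ S.powerset.erase ∅, (-2 : R) ^ #I := by
      rw [filter_ne', mul_sum, sum_congr rfl two_mul_term]
    _ = ∑ I ∈ S.powerset, (-2 : R) ^ #I := by
      rw [← add_sum_erase _ _ (empty_mem_powerset S), card_empty, pow_zero]
    _ = (-2 + 1) ^ #S := by
      simpa using sum_pow_mul_eq_add_pow (-2 : R) 1 S
    _ = (-1) ^ #S := by
      norm_num

/-- Half the mark at `D_d` in the Burnside ring of `O(2)`, on combinations of dihedral classes:
the fixed-point set `(O(2)/D_n)^{D_d}` has two points if `d ∣ n` and is empty otherwise. -/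
noncomputable def halfMark (d : ℕ) : (ℕ →₀ ℤ) →ₗ[ℤ] ℤ :=
  Finsupp.linearCombination ℤ fun n => if d ∣ n then 1 else 0

theorem halfMark_single (d n : ℕ) (a : ℤ) :
    halfMark d (Finsupp.single n a) = if d ∣ n then a else 0 := by
  simp [halfMark]

theorem halfMark_eq_sum (d : ℕ) (p : ℕ →₀ ℤ) :
    halfMark d p = ∑ n ∈ p.support, if d ∣ n then p n else 0 := by
  simp [halfMark, Finsupp.linearCombination_apply, Finsupp.sum]

theorem halfMark_sum_single_gcd (d : ℕ) (p q : ℕ →₀ ℤ) :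
    halfMark d (∑ i ∈ p.support, ∑ n ∈ q.support, Finsupp.single (i.gcd n) (p i * q n)) =
      halfMark d p * halfMark d q := by
  simp_rw [map_sum, halfMark_single, Nat.dvd_gcd_iff, halfMark_eq_sum, sum_mul_sum,
    ite_zero_mul_ite_zero]

theorem halfMark_eq_apply_of_mem_supported_dvd {x : ℕ} {p : ℕ →₀ ℤ}
    (hp : p ∈ Finsupp.supported ℤ ℤ {n | n ∣ x}) : halfMark x p = p x := by
  rw [halfMark_eq_sum, sum_eq_single x]
  · simp
  · intro n hn hnx
    exact if_neg fun hxn => hnx (Nat.dvd_antisymm (hp hn) hxn)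
  · simp +contextual

theorem halfMark_alphaF (d : ℕ) (S : Finset ℕ) :
    halfMark d (alphaF S) =
      ∑ I ∈ ({s ∈ S | d ∣ s} : Finset ℕ).powerset with I ≠ ∅, (-1) ^ #I * 2 ^ (#I - 1) := by
  simp_rw [alphaF, map_sum, halfMark_single, ← sum_filter]
  congr 1
  ext I
  simp only [mem_filter, mem_powerset, Finset.dvd_gcd_iff, id, subset_iff]
  grind

theorem halfMark_keyOp (d : ℕ) (S : Finset ℕ) (p : ℕ →₀ ℤ) :
    halfMark d (keyOp S p) = (-1) ^ #{s ∈ S | d ∣ s} * halfMark d p := by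
  rw [keyOp, map_add, map_nsmul, halfMark_sum_single_gcd,
    ← one_add_two_mul_sum_nonempty_powerset, ← halfMark_alphaF]
  ring

theorem keyOp_mem_supported_dvd {x : ℕ} {p : ℕ →₀ ℤ} (S : Finset ℕ)
    (hp : p ∈ Finsupp.supported ℤ ℤ {n | n ∣ x}) :
    keyOp S p ∈ Finsupp.supported ℤ ℤ {n | n ∣ x} := by
  have single_gcd_mem : ∀ i ∈ p.support, ∀ n ∈ (alphaF S).support,
      Finsupp.single (i.gcd n) (p i * alphaF S n) ∈ Finsupp.supported ℤ ℤ {n | n ∣ x} :=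
    fun i hi n _ => Finsupp.single_mem_supported ℤ _ ((i.gcd_dvd_left n).trans (hp hi))
  rw [keyOp]
  exact add_mem hp <| nsmul_mem (sum_mem fun i hi => sum_mem (single_gcd_mem i hi)) 2

theorem keyOp_apply_of_mem_supported_dvd {x : ℕ} {p : ℕ →₀ ℤ} (S : Finset ℕ)
    (hp : p ∈ Finsupp.supported ℤ ℤ {n | n ∣ x}) :
    keyOp S p x = (-1) ^ #{s ∈ S | x ∣ s} * p x := by
  rw [← halfMark_eq_apply_of_mem_supported_dvd (keyOp_mem_supported_dvd S hp), halfMark_keyOp,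
    halfMark_eq_apply_of_mem_supported_dvd hp]

theorem keyOp_single_apply_self (S : Finset ℕ) (x : ℕ) :
    keyOp S (Finsupp.single x 1) x = (-1) ^ #{s ∈ S | x ∣ s} := by
  simp [keyOp_apply_of_mem_supported_dvd S (Finsupp.single_mem_supported ℤ 1 (dvd_refl x))]

theorem keyOp_single_apply_self_ne_iff (S T : Finset ℕ) (x : ℕ) :
    keyOp S (Finsupp.single x 1) x ≠ keyOp T (Finsupp.single x 1) x ↔
      Odd #{s ∈ symmDiff S T | x ∣ s} := by
  have filter_symmDiff : ({s ∈ symmDiff S T | x ∣ s} : Finset ℕ) =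
      symmDiff {s ∈ S | x ∣ s} {s ∈ T | x ∣ s} := by
    grind [mem_symmDiff]
  rw [keyOp_single_apply_self, keyOp_single_apply_self,
    neg_one_pow_ne_neg_one_pow_iff (by decide), filter_symmDiff, odd_card_symmDiff_iff]

theorem one_query_distinguisher_general (S₀ S₁ : Finset ℕ) (x : ℕ) (hmem : x ∈ symmDiff S₀ S₁)
    (hmax : ∀ y ∈ symmDiff S₀ S₁, x ∣ y → y = x) :
    keyOp S₀ (Finsupp.single x 1) x ≠ keyOp S₁ (Finsupp.single x 1) x := by
  have multiples_eq : ({s ∈ symmDiff S₀ S₁ | x ∣ s} : Finset ℕ) = {x} := by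
    grind [Nat.dvd_refl]
  rw [keyOp_single_apply_self_ne_iff, multiples_eq, card_singleton]
  exact odd_one

/-- (One-query distinguisher) If `x*` is the largest element of the symmetric
difference `S₀ △ S₁`, then the single chosen-plaintext query `(D_{x*})`
distinguishes the keys with certainty: the coefficients of `(D_{x*})` in the
two ciphertexts differ. -/
theorem one_query_distinguisher (S₀ S₁ : Finset ℕ)
    (h₀ : ∀ s ∈ S₀, 0 < s) (h₁ : ∀ s ∈ S₁, 0 < s) (hne : S₀ ≠ S₁)
    (xstar : ℕ) (hmem : xstar ∈ (S₀ \ S₁) ∪ (S₁ \ S₀))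
    (hmax : ∀ y ∈ (S₀ \ S₁) ∪ (S₁ \ S₀), y ≤ xstar) :
    keyOp S₀ (Finsupp.single xstar 1) xstar
      ≠ keyOp S₁ (Finsupp.single xstar 1) xstar := by
  have hpos : ∀ y ∈ (S₀ \ S₁) ∪ (S₁ \ S₀), 0 < y := by grind
  exact one_query_distinguisher_general S₀ S₁ xstar hmem fun y hy hdvd =>
    (hmax y hy).antisymm (Nat.le_of_dvd (hpos y hy) hdvd)
end
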